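/- For every α' ∈ (1/2, 1), ∫₀^{1/2} ( (1−l)^{2α'} + l^{2α'} − 1 ) / ( l^{α'+1}·(1−l)^{α'+1} ) dl = cos(π α') · ∫₀^∞ ( (1+l)^{2α'} + l^{2α'} − 1 ) / ( l^{α'+1}·(1+l)^{α'+1} ) dl. Equivalently, the unique ratio A₊/A₋ > 0 for which A₊·I₁(α') + A₋·I₂(α') = 0 is A₊/A₋ = −cos(π α'). -/

import Mathlib

open MeasureTheory

/-!
Formally, expanding the numerators writes both integrals as sums of Beta integrals with exponents
outside the domain of convergence. Regularising them by integration by parts gives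
`I₁ = -B(-α, 2α + 1)` and `I₂ = -B(-α, -α) / 2`, where `B(u, v) = Γ(u) Γ(v) / Γ(u + v)`, and the
reflection formula at `u` and at `2u` gives `B(u, u) = 2 cos(πu) B(u, 1 - 2u)`.
-/

open Set Filter Topology ProbabilityTheory

section BetaFunction

theorem mul_beta_add_one_right {u v : ℝ} (hu : u ≠ 0) (hv : v ≠ 0) :
    u * beta u (v + 1) = v * beta (u + 1) v := by
  rw [beta, beta, Real.Gamma_add_one hu, Real.Gamma_add_one hv, add_right_comm u 1 v, ← add_assoc]
  ring

theorem mul_beta_self {u : ℝ} (hu : u ≠ 0) :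
    u * beta u u = 2 * (2 * u + 1) * beta (u + 1) (u + 1) := by
  rw [beta, beta, Real.Gamma_add_one hu, ← two_mul, show u + 1 + (u + 1) = 2 * u + 1 + 1 by ring]
  rcases eq_or_ne (2 * u + 1) 0 with h | h
  · -- Both sides vanish, the left one because `Real.Gamma` takes the value `0` at the pole `-1`.
    have hpole : Real.Gamma (2 * u) = 0 := by
      simpa [show 2 * u = -1 by linarith] using Real.Gamma_neg_nat_eq_zero 1
    simp [h, hpole]
  · rw [Real.Gamma_add_one h, Real.Gamma_add_one (mul_ne_zero two_ne_zero hu)]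
    rw [mul_comm 2 u] at h ⊢
    field_simp

theorem beta_self_eq_two_mul_cos_mul_beta {u : ℝ} (hu : u < 1 / 2) :
    beta u u = 2 * Real.cos (Real.pi * u) * beta u (1 - 2 * u) := by
  have hΓ₁ : Real.Gamma (1 - u) ≠ 0 := (Real.Gamma_pos_of_pos (by linarith)).ne'
  have hΓ₂ : Real.Gamma (1 - 2 * u) ≠ 0 := (Real.Gamma_pos_of_pos (by linarith)).ne'
  have reflection_u : Real.Gamma u = Real.pi / Real.sin (Real.pi * u) / Real.Gamma (1 - u) :=
    eq_div_of_mul_eq hΓ₁ (Real.Gamma_mul_Gamma_one_sub u)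
  have reflection_two_mul_u : Real.Gamma (2 * u) =
      Real.pi / (2 * Real.sin (Real.pi * u) * Real.cos (Real.pi * u)) /
        Real.Gamma (1 - 2 * u) := by
    rw [← Real.sin_two_mul, mul_left_comm]
    exact eq_div_of_mul_eq hΓ₂ (Real.Gamma_mul_Gamma_one_sub (2 * u))
  rw [beta, beta, ← two_mul, show u + (1 - 2 * u) = 1 - u by ring, reflection_two_mul_u,
    reflection_u]
  rcases eq_or_ne (Real.sin (Real.pi * u)) 0 with hsin | hsin
  · simp [hsin]
  · field_simp

end BetaFunction

section BetaIntegral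

variable {u v : ℝ}

theorem intervalIntegrable_rpow_mul_one_sub_rpow (hu : 0 < u) (hv : 0 < v) :
    IntervalIntegrable (fun x : ℝ => x ^ (u - 1) * (1 - x) ^ (v - 1)) volume 0 1 := by
  have hconv := Complex.betaIntegral_convergent (u := u) (v := v) hu hv
  rw [intervalIntegrable_iff_integrableOn_Ioo_of_le zero_le_one] at hconv ⊢
  refine hconv.re.congr ?_
  filter_upwards [ae_restrict_mem measurableSet_Ioo] with x hx
  norm_cast
  rw [← Complex.ofReal_cpow hx.1.le, ← Complex.ofReal_cpow (sub_nonneg.2 hx.2.le)]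
  norm_cast

theorem integral_rpow_mul_one_sub_rpow (hu : 0 < u) (hv : 0 < v) :
    ∫ x in (0 : ℝ)..1, x ^ (u - 1) * (1 - x) ^ (v - 1) = beta u v := by
  have hcast : Complex.betaIntegral u v =
      ((∫ x in (0 : ℝ)..1, x ^ (u - 1) * (1 - x) ^ (v - 1) : ℝ) : ℂ) := by
    rw [← intervalIntegral.integral_ofReal, Complex.betaIntegral]
    refine intervalIntegral.integral_congr fun x hx => ?_
    rw [uIcc_of_le zero_le_one] at hx
    simp [Complex.ofReal_cpow hx.1, Complex.ofReal_cpow (sub_nonneg.2 hx.2)]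
  rw [beta_eq_betaIntegralReal u v hu hv, hcast, Complex.ofReal_re]

theorem one_half_mem_uIcc_zero_one : (1 / 2 : ℝ) ∈ uIcc 0 1 := by
  rw [uIcc_of_le zero_le_one]
  constructor <;> norm_num

theorem intervalIntegral_zero_half_of_symm {f : ℝ → ℝ} (hf : IntervalIntegrable f volume 0 1)
    (hsymm : ∀ x, f (1 - x) = f x) :
    ∫ x in (0 : ℝ)..(1 / 2), f x = (∫ x in (0 : ℝ)..1, f x) / 2 := by
  have hsplit := intervalIntegral.integral_add_adjacent_intervals
    (hf.mono_set (uIcc_subset_uIcc_left one_half_mem_uIcc_zero_one))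
    (hf.mono_set (uIcc_subset_uIcc_right one_half_mem_uIcc_zero_one))
  have hreflect : ∫ x in (0 : ℝ)..(1 / 2), f x = ∫ x in (1 / 2 : ℝ)..1, f x := by
    have := intervalIntegral.integral_comp_sub_left (a := 0) (b := 1 / 2) f 1
    norm_num [hsymm] at this ⊢
    exact this
  linarith

theorem integral_zero_half_rpow_mul_one_sub_rpow (hu : 0 < u) :
    ∫ x in (0 : ℝ)..(1 / 2), x ^ (u - 1) * (1 - x) ^ (u - 1) = beta u u / 2 := by
  rw [← integral_rpow_mul_one_sub_rpow hu hu]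
  refine intervalIntegral_zero_half_of_symm (intervalIntegrable_rpow_mul_one_sub_rpow hu hu)
    fun x => ?_
  rw [sub_sub_cancel, mul_comm]

end BetaIntegral

section RegularizedBetaIntegral

variable {u p : ℝ}

theorem one_sub_mul_le_one_sub_rpow {x : ℝ} (hx : x ∈ Icc (0 : ℝ) 1) :
    1 - max 1 p * x ≤ (1 - x) ^ p := by
  rcases hx.2.eq_or_lt with rfl | hx1
  · rw [sub_self, mul_one]
    exact (sub_nonpos.2 (le_max_left 1 p)).trans (Real.rpow_nonneg le_rfl p)
  calc 1 - max 1 p * x = 1 + max 1 p * -x := by ring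
    _ ≤ (1 + -x) ^ max 1 p :=
      one_add_mul_self_le_rpow_one_add (neg_le_neg hx.2) (le_max_left 1 p)
    _ ≤ (1 - x) ^ p :=
      Real.rpow_le_rpow_of_exponent_ge (sub_pos.2 hx1) (sub_le_self 1 hx.1) (le_max_right 1 p)

theorem rpow_mul_one_sub_one_sub_rpow_mem_Icc (hp : 0 ≤ p) {x : ℝ} (hx : x ∈ Ioc (0 : ℝ) 1) :
    x ^ u * (1 - (1 - x) ^ p) ∈ Icc 0 (max 1 p * x ^ (u + 1)) := by
  have hpow : 0 ≤ x ^ u := Real.rpow_nonneg hx.1.le u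
  have hlower : (1 - x) ^ p ≤ 1 :=
    Real.rpow_le_one (sub_nonneg.2 hx.2) (sub_le_self 1 hx.1.le) hp
  have hupper : 1 - (1 - x) ^ p ≤ max 1 p * x :=
    sub_le_comm.1 (one_sub_mul_le_one_sub_rpow (Ioc_subset_Icc_self hx))
  refine ⟨mul_nonneg hpow (sub_nonneg.2 hlower), ?_⟩
  calc x ^ u * (1 - (1 - x) ^ p) ≤ x ^ u * (max 1 p * x) := by gcongr
    _ = max 1 p * x ^ (u + 1) := by rw [Real.rpow_add_one hx.1.ne']; ring

theorem intervalIntegrable_rpow_mul_one_sub_one_sub_rpow (hu : -1 < u) (hp : 0 ≤ p) :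
    IntervalIntegrable (fun x : ℝ => x ^ (u - 1) * (1 - (1 - x) ^ p)) volume 0 1 := by
  refine ((intervalIntegral.intervalIntegrable_rpow' hu).const_mul (max 1 p)).mono_fun'
    (Measurable.aestronglyMeasurable (by fun_prop)) ?_
  rw [uIoc_of_le zero_le_one]
  filter_upwards [ae_restrict_mem measurableSet_Ioc] with x hx
  have hbound := rpow_mul_one_sub_one_sub_rpow_mem_Icc (u := u - 1) hp hx
  rw [sub_add_cancel] at hbound
  rw [Real.norm_of_nonneg hbound.1]
  exact hbound.2

theorem tendsto_rpow_nhdsGT_zero (hu : 0 < u) : Tendsto (fun x : ℝ => x ^ u) (𝓝[>] 0) (𝓝 0) := by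
  have hcont := (Real.continuousAt_rpow_const 0 u (Or.inr hu.le)).tendsto
  rw [Real.zero_rpow hu.ne'] at hcont
  exact hcont.mono_left nhdsWithin_le_nhds

theorem tendsto_rpow_mul_one_sub_one_sub_rpow (hu : -1 < u) (hp : 0 ≤ p) :
    Tendsto (fun x : ℝ => x ^ u * (1 - (1 - x) ^ p)) (𝓝[>] 0) (𝓝 0) := by
  have hmem : ∀ᶠ x : ℝ in 𝓝[>] 0,
      x ^ u * (1 - (1 - x) ^ p) ∈ Icc 0 (max 1 p * x ^ (u + 1)) := by
    filter_upwards [Ioc_mem_nhdsGT zero_lt_one] with x hx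
      using rpow_mul_one_sub_one_sub_rpow_mem_Icc hp hx
  refine squeeze_zero' (hmem.mono fun _ h => h.1) (hmem.mono fun _ h => h.2) ?_
  simpa using (tendsto_rpow_nhdsGT_zero (by linarith : 0 < u + 1)).const_mul (max 1 p)

theorem hasDerivAt_one_sub_rpow {x : ℝ} (hx : x ≠ 1) (p : ℝ) :
    HasDerivAt (fun y : ℝ => (1 - y) ^ p) (-(p * (1 - x) ^ (p - 1))) x := by
  simpa using ((hasDerivAt_id x).const_sub 1).rpow_const (p := p) (Or.inl (sub_ne_zero.2 hx.symm))

theorem integral_rpow_mul_one_sub_one_sub_rpow (hu : -1 < u) (hu₀ : u ≠ 0) (hp : 0 < p) :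
    ∫ x in (0 : ℝ)..1, x ^ (u - 1) * (1 - (1 - x) ^ p) = 1 / u - beta u (p + 1) := by
  have hint := intervalIntegrable_rpow_mul_one_sub_one_sub_rpow hu hp.le
  have hbeta := intervalIntegrable_rpow_mul_one_sub_rpow (by linarith : 0 < u + 1) hp
  have hderiv : ∀ x ∈ Ioo (0 : ℝ) 1, HasDerivAt (fun x : ℝ => x ^ u * (1 - (1 - x) ^ p))
      (u * (x ^ (u - 1) * (1 - (1 - x) ^ p)) + p * (x ^ (u + 1 - 1) * (1 - x) ^ (p - 1))) x := by
    intro x hx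
    convert! (Real.hasDerivAt_rpow_const (Or.inl hx.1.ne')).mul
      ((hasDerivAt_one_sub_rpow hx.2.ne p).const_sub 1) using 1
    rw [add_sub_cancel_right]
    ring
  have hone : Tendsto (fun x : ℝ => x ^ u * (1 - (1 - x) ^ p)) (𝓝[<] 1) (𝓝 1) := by
    have hcont : ContinuousAt (fun x : ℝ => x ^ u * (1 - (1 - x) ^ p)) 1 :=
      (Real.continuousAt_rpow_const 1 u (Or.inl one_ne_zero)).mul
        (continuousAt_const.sub
          ((continuousAt_const.sub continuousAt_id).rpow_const (Or.inr hp.le)))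
    simpa [Real.zero_rpow hp.ne'] using hcont.tendsto.mono_left nhdsWithin_le_nhds
  have hparts := intervalIntegral.integral_eq_sub_of_hasDerivAt_of_tendsto zero_lt_one hderiv
    ((hint.const_mul u).add (hbeta.const_mul p))
    (tendsto_rpow_mul_one_sub_one_sub_rpow hu hp.le) hone
  rw [intervalIntegral.integral_add (hint.const_mul u) (hbeta.const_mul p),
    intervalIntegral.integral_const_mul, intervalIntegral.integral_const_mul,
    integral_rpow_mul_one_sub_rpow (by linarith) hp, ← mul_beta_add_one_right hu₀ hp.ne'] at hparts
  field_simp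
  linarith

end RegularizedBetaIntegral

theorem integral_Ioi_eq_integral_div_one_sub {E : Type*} [NormedAddCommGroup E] [NormedSpace ℝ E]
    (g : ℝ → E) :
    ∫ l in Ioi (0 : ℝ), g l = ∫ x in (0 : ℝ)..1, ((1 - x) ^ 2)⁻¹ • g (x / (1 - x)) := by
  have himage : (fun x : ℝ => x / (1 - x)) '' Ioo 0 1 = Ioi 0 := by
    ext l
    constructor
    · rintro ⟨x, hx, rfl⟩
      exact div_pos hx.1 (sub_pos.2 hx.2)
    · intro (hl : 0 < l)
      refine ⟨l / (1 + l), ⟨by positivity, (div_lt_one (by positivity)).2 (by linarith)⟩, ?_⟩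
      field_simp
      ring
  have hderiv : ∀ x ∈ Ioo (0 : ℝ) 1,
      HasDerivWithinAt (fun x : ℝ => x / (1 - x)) ((1 - x) ^ 2)⁻¹ (Ioo 0 1) x := by
    intro x hx
    convert! ((hasDerivAt_id x).div ((hasDerivAt_id x).const_sub 1)
      (sub_pos.2 hx.2).ne').hasDerivWithinAt using 1
    simp [← one_div]
  have hinj : InjOn (fun x : ℝ => x / (1 - x)) (Ioo 0 1) := by
    intro x hx y hy (hxy : x / (1 - x) = y / (1 - y))
    rw [div_eq_div_iff (sub_pos.2 hx.2).ne' (sub_pos.2 hy.2).ne'] at hxy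
    linarith
  rw [← himage, integral_image_eq_integral_abs_deriv_smul measurableSet_Ioo hderiv hinj,
    intervalIntegral.integral_of_le zero_le_one, integral_Ioc_eq_integral_Ioo]
  simp

section JumpIntegrals

variable {α : ℝ}

/-- The integrand of `I₁(α)`, with `l` the relative size of a positive jump. -/
noncomputable def posJumpIntegrand (α l : ℝ) : ℝ :=
  ((1 + l) ^ (2 * α) + l ^ (2 * α) - 1) / (l ^ (α + 1) * (1 + l) ^ (α + 1))

/-- The integrand of `I₂(α)`, with `l` the relative size of a negative jump. -/
noncomputable def negJumpIntegrand (α l : ℝ) : ℝ :=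
  ((1 - l) ^ (2 * α) + l ^ (2 * α) - 1) / (l ^ (α + 1) * (1 - l) ^ (α + 1))

/-- The integral `I₁(α)` of the paper, the contribution of the positive jumps. -/
noncomputable def posJumpIntegral (α : ℝ) : ℝ :=
  ∫ l in Ioi (0 : ℝ), posJumpIntegrand α l

/-- The integral `I₂(α)` of the paper, the contribution of the negative jumps. -/
noncomputable def negJumpIntegral (α : ℝ) : ℝ :=
  ∫ l in Ioo (0 : ℝ) (1 / 2), negJumpIntegrand α l

theorem posJumpIntegrand_div_one_sub {x : ℝ} (hx : x ∈ Ioo (0 : ℝ) 1) :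
    ((1 - x) ^ 2)⁻¹ * posJumpIntegrand α (x / (1 - x)) =
      x ^ (-α - 1) * (1 - (1 - x) ^ (2 * α)) + x ^ (α - 1) := by
  have hx₀ : 0 < x := hx.1
  have hy₀ : 0 < 1 - x := sub_pos.2 hx.2
  have hsum : 1 + x / (1 - x) = (1 - x)⁻¹ := by field_simp; ring
  rw [posJumpIntegrand, hsum, Real.div_rpow hx₀.le hy₀.le, Real.div_rpow hx₀.le hy₀.le,
    Real.inv_rpow hy₀.le, Real.inv_rpow hy₀.le, two_mul, Real.rpow_add hx₀, Real.rpow_add hy₀,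
    Real.rpow_add_one hx₀.ne', Real.rpow_add_one hy₀.ne', Real.rpow_sub_one hx₀.ne',
    Real.rpow_sub_one hx₀.ne', Real.rpow_neg hx₀.le]
  field_simp
  ring

theorem posJumpIntegral_eq_neg_beta (hα : α ∈ Ioo (0 : ℝ) 1) :
    posJumpIntegral α = -beta (-α) (2 * α + 1) := by
  obtain ⟨hα₀, hα₁⟩ := hα
  have hneg : -1 < -α := neg_lt_neg hα₁
  calc posJumpIntegral α
      = ∫ x in (0 : ℝ)..1, (x ^ (-α - 1) * (1 - (1 - x) ^ (2 * α)) + x ^ (α - 1)) := by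
        rw [posJumpIntegral, integral_Ioi_eq_integral_div_one_sub,
          intervalIntegral.integral_of_le zero_le_one, intervalIntegral.integral_of_le zero_le_one,
          integral_Ioc_eq_integral_Ioo, integral_Ioc_eq_integral_Ioo]
        exact setIntegral_congr_fun measurableSet_Ioo fun x hx => posJumpIntegrand_div_one_sub hx
    _ = (1 / -α - beta (-α) (2 * α + 1)) + 1 / α := by
        rw [intervalIntegral.integral_add
            (intervalIntegrable_rpow_mul_one_sub_one_sub_rpow hneg (by positivity))
            (intervalIntegral.intervalIntegrable_rpow' (by linarith)),
          integral_rpow_mul_one_sub_one_sub_rpow hneg (neg_ne_zero.2 hα₀.ne') (by positivity),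
          integral_rpow (Or.inl (by linarith))]
        simp [hα₀.ne']
    _ = -beta (-α) (2 * α + 1) := by ring

theorem posJumpIntegral_pos (hα : α ∈ Ioo (0 : ℝ) 1) : 0 < posJumpIntegral α := by
  have hα₀ : 0 < α := hα.1
  have hbeta : 0 < beta (-α + 1) (2 * α) := beta_pos (by linarith [hα.2]) (by positivity)
  have hshift := mul_beta_add_one_right (neg_ne_zero.2 hα₀.ne') (mul_pos two_pos hα₀).ne'
  rw [posJumpIntegral_eq_neg_beta hα]
  refine pos_of_mul_pos_right (a := α) ?_ hα₀.le
  calc 0 < 2 * α * beta (-α + 1) (2 * α) := by positivity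
    _ = α * -beta (-α) (2 * α + 1) := by linarith

theorem negJumpIntegrand_eq {l : ℝ} (hl : l ∈ Ioo (0 : ℝ) 1) :
    negJumpIntegrand α l =
      (l ^ (α - 1) - l ^ (-α - 1) * (1 - (1 - l) ^ (2 * α))) * (1 - l) ^ (-α - 1) := by
  have hl₀ : 0 < l := hl.1
  have hm₀ : 0 < 1 - l := sub_pos.2 hl.2
  rw [negJumpIntegrand, two_mul, Real.rpow_add hl₀, Real.rpow_add hm₀, Real.rpow_add_one hl₀.ne',
    Real.rpow_add_one hm₀.ne', Real.rpow_sub_one hl₀.ne', Real.rpow_sub_one hl₀.ne',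
    Real.rpow_sub_one hm₀.ne', Real.rpow_neg hl₀.le, Real.rpow_neg hm₀.le]
  field_simp
  ring

theorem intervalIntegrable_negJumpIntegrand (hα : α ∈ Ioo (0 : ℝ) 1) :
    IntervalIntegrable (negJumpIntegrand α) volume 0 (1 / 2) := by
  obtain ⟨hα₀, hα₁⟩ := hα
  have hregularized : IntervalIntegrable (fun l : ℝ => l ^ (-α - 1) * (1 - (1 - l) ^ (2 * α)))
      volume 0 (1 / 2) :=
    (intervalIntegrable_rpow_mul_one_sub_one_sub_rpow (neg_lt_neg hα₁) (by positivity)).mono_set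
      (uIcc_subset_uIcc_left one_half_mem_uIcc_zero_one)
  have hcont : ContinuousOn (fun l : ℝ => (1 - l) ^ (-α - 1)) (uIcc 0 (1 / 2)) := by
    rw [uIcc_of_le (by norm_num)]
    exact (continuousOn_const.sub continuousOn_id).rpow_const fun l hl =>
      Or.inl (sub_pos.2 (by linarith [hl.2] : l < 1)).ne'
  have hpow : IntervalIntegrable (fun l : ℝ => l ^ (α - 1)) volume 0 (1 / 2) :=
    intervalIntegral.intervalIntegrable_rpow' (by linarith)
  refine ((hpow.sub hregularized).mul_continuousOn hcont).congr fun l hl => ?_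
  rw [uIoc_of_le (by norm_num)] at hl
  exact (negJumpIntegrand_eq ⟨hl.1, by linarith [hl.2]⟩).symm

/-- A primitive of `α` times `negJumpIntegrand α`, up to a multiple of the convergent Beta integrand
`(l * (1 - l)) ^ (-α)`. It equals
`(l / (1 - l)) ^ α - ((1 - l) / l) ^ α + (1 - 2 * l) * (l * (1 - l)) ^ (-α)`,
one term for each term of the numerator, arranged so that each factor has a limit at `0`. -/
noncomputable def negJumpPrimitive (α l : ℝ) : ℝ :=
  (1 - l) ^ (-α) * (l ^ α + l ^ (-α) * (1 - (1 - l) ^ (2 * α)) - 2 * l ^ (1 - α))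

theorem hasDerivAt_negJumpPrimitive {l : ℝ} (hl : l ∈ Ioo (0 : ℝ) 1) :
    HasDerivAt (negJumpPrimitive α)
      (α * negJumpIntegrand α l + (4 * α - 2) * (l ^ (-α) * (1 - l) ^ (-α))) l := by
  have hl₀ : 0 < l := hl.1
  have hm₀ : 0 < 1 - l := sub_pos.2 hl.2
  have hpow (p : ℝ) : HasDerivAt (fun l : ℝ => l ^ p) (p * l ^ (p - 1)) l :=
    Real.hasDerivAt_rpow_const (Or.inl hl₀.ne')
  have hpow_one_sub := hasDerivAt_one_sub_rpow hl.2.ne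
  convert! (hpow_one_sub (-α)).mul (((hpow α).add
    ((hpow (-α)).mul ((hpow_one_sub (2 * α)).const_sub 1))).sub
      ((hpow (1 - α)).const_mul 2)) using 1
  simp only [negJumpIntegrand, Pi.add_apply, Pi.sub_apply, Pi.mul_apply]
  rw [sub_eq_add_neg 1 α, Real.rpow_sub_one hl₀.ne', Real.rpow_sub_one hl₀.ne',
    Real.rpow_sub_one hl₀.ne', Real.rpow_sub_one hm₀.ne', Real.rpow_sub_one hm₀.ne',
    Real.rpow_add_one hl₀.ne', Real.rpow_add_one hm₀.ne', Real.rpow_add hl₀, Real.rpow_one,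
    two_mul, Real.rpow_add hl₀, Real.rpow_add hm₀, Real.rpow_neg hl₀.le, Real.rpow_neg hm₀.le]
  field_simp
  ring

theorem tendsto_negJumpPrimitive_zero (hα : α ∈ Ioo (0 : ℝ) 1) :
    Tendsto (negJumpPrimitive α) (𝓝[>] 0) (𝓝 0) := by
  obtain ⟨hα₀, hα₁⟩ := hα
  have hprefactor : Tendsto (fun l : ℝ => (1 - l) ^ (-α)) (𝓝[>] 0) (𝓝 1) := by
    simpa using (hasDerivAt_one_sub_rpow zero_ne_one (-α)).continuousAt.tendsto.mono_left
      nhdsWithin_le_nhds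
  have hlim := hprefactor.mul (((tendsto_rpow_nhdsGT_zero hα₀).add
    (tendsto_rpow_mul_one_sub_one_sub_rpow (neg_lt_neg hα₁) (by positivity : 0 ≤ 2 * α))).sub
      ((tendsto_rpow_nhdsGT_zero (sub_pos.2 hα₁)).const_mul 2))
  simp only [add_zero, mul_zero, sub_zero] at hlim
  exact hlim

theorem negJumpPrimitive_half (α : ℝ) : negJumpPrimitive α (1 / 2) = 0 := by
  have hhalf : (0 : ℝ) < 1 / 2 := by norm_num
  rw [negJumpPrimitive, show (1 : ℝ) - 1 / 2 = 1 / 2 by norm_num, Real.rpow_sub hhalf,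
    Real.rpow_one, two_mul, Real.rpow_add hhalf, Real.rpow_neg hhalf.le]
  field_simp
  ring

theorem negJumpIntegral_eq_neg_beta_div_two (hα : α ∈ Ioo (0 : ℝ) 1) :
    negJumpIntegral α = -beta (-α) (-α) / 2 := by
  have hα₀ : α ≠ 0 := hα.1.ne'
  have hpos : 0 < -α + 1 := by linarith [hα.2]
  have hhalf : (0 : ℝ) < 1 / 2 := by norm_num
  have hint := intervalIntegrable_negJumpIntegrand hα
  have hbeta : IntervalIntegrable (fun l : ℝ => l ^ (-α) * (1 - l) ^ (-α)) volume 0 (1 / 2) := by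
    simpa using (intervalIntegrable_rpow_mul_one_sub_rpow hpos hpos).mono_set
      (uIcc_subset_uIcc_left one_half_mem_uIcc_zero_one)
  have hbeta_eq : ∫ l in (0 : ℝ)..(1 / 2), l ^ (-α) * (1 - l) ^ (-α) =
      beta (-α + 1) (-α + 1) / 2 := by
    simpa using integral_zero_half_rpow_mul_one_sub_rpow hpos
  have htendsto_half : Tendsto (negJumpPrimitive α) (𝓝[<] (1 / 2)) (𝓝 0) := by
    rw [← negJumpPrimitive_half α]
    exact (hasDerivAt_negJumpPrimitive ⟨hhalf, by norm_num⟩).continuousAt.tendsto.mono_left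
      nhdsWithin_le_nhds
  have hFTC := intervalIntegral.integral_eq_sub_of_hasDerivAt_of_tendsto hhalf
    (fun l hl => hasDerivAt_negJumpPrimitive (α := α) ⟨hl.1, by linarith [hl.2]⟩)
    ((hint.const_mul α).add (hbeta.const_mul (4 * α - 2)))
    (tendsto_negJumpPrimitive_zero hα) htendsto_half
  rw [intervalIntegral.integral_add (hint.const_mul α) (hbeta.const_mul _),
    intervalIntegral.integral_const_mul, intervalIntegral.integral_const_mul, hbeta_eq,
    intervalIntegral.integral_of_le hhalf.le, integral_Ioc_eq_integral_Ioo,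
    ← negJumpIntegral] at hFTC
  refine mul_left_cancel₀ hα₀ ?_
  linear_combination hFTC - mul_beta_self (neg_ne_zero.2 hα₀) / 2

theorem negJumpIntegral_eq_cos_mul_posJumpIntegral (hα : α ∈ Ioo (0 : ℝ) 1) :
    negJumpIntegral α = Real.cos (Real.pi * α) * posJumpIntegral α := by
  have hreflection := beta_self_eq_two_mul_cos_mul_beta (u := -α) (by linarith [hα.1])
  rw [mul_neg, Real.cos_neg, mul_neg, sub_neg_eq_add, add_comm 1] at hreflection
  rw [negJumpIntegral_eq_neg_beta_div_two hα, posJumpIntegral_eq_neg_beta hα, hreflection]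
  ring

end JumpIntegrals

theorem conservation_identity_ratio_general {α : ℝ} (hα : α ∈ Ioo (0 : ℝ) 1) :
    negJumpIntegral α = Real.cos (Real.pi * α) * posJumpIntegral α ∧
      ∀ Aplus Aminus : ℝ, Aminus ≠ 0 →
        (Aplus * posJumpIntegral α + Aminus * negJumpIntegral α = 0 ↔
          Aplus / Aminus = -Real.cos (Real.pi * α)) := by
  have hratio := negJumpIntegral_eq_cos_mul_posJumpIntegral hα
  refine ⟨hratio, fun Aplus Aminus hAminus => ?_⟩
  calc Aplus * posJumpIntegral α + Aminus * negJumpIntegral α = 0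
      ↔ (Aplus + Real.cos (Real.pi * α) * Aminus) * posJumpIntegral α = 0 := by
        rw [hratio]; ring_nf
    _ ↔ Aplus + Real.cos (Real.pi * α) * Aminus = 0 :=
        mul_eq_zero_iff_right (posJumpIntegral_pos hα).ne'
    _ ↔ Aplus / Aminus = -Real.cos (Real.pi * α) := by
        rw [div_eq_iff hAminus, neg_mul, add_eq_zero_iff_eq_neg]

/-- For `α' ∈ (1/2,1)`,
`∫₀^{1/2} ((1−l)^{2α'} + l^{2α'} − 1)/(l^{α'+1}(1−l)^{α'+1}) dl
  = cos(πα') · ∫₀^∞ ((1+l)^{2α'} + l^{2α'} − 1)/(l^{α'+1}(1+l)^{α'+1}) dl`;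
equivalently, for `A₊, A₋ > 0`, `A₊·I₁ + A₋·I₂ = 0` iff `A₊/A₋ = −cos(πα')`. -/
theorem conservation_identity_ratio (α' : ℝ) (hα' : α' ∈ Set.Ioo (1 / 2 : ℝ) 1) :
    (∫ l in Set.Ioo (0 : ℝ) (1 / 2),
        ((1 - l) ^ (2 * α') + l ^ (2 * α') - 1) / (l ^ (α' + 1) * (1 - l) ^ (α' + 1))) =
      Real.cos (Real.pi * α') *
        ∫ l in Set.Ioi (0 : ℝ),
          ((1 + l) ^ (2 * α') + l ^ (2 * α') - 1) / (l ^ (α' + 1) * (1 + l) ^ (α' + 1)) ∧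
    ∀ Aplus Aminus : ℝ, 0 < Aplus → 0 < Aminus →
      (Aplus * (∫ l in Set.Ioi (0 : ℝ),
          ((1 + l) ^ (2 * α') + l ^ (2 * α') - 1) / (l ^ (α' + 1) * (1 + l) ^ (α' + 1))) +
        Aminus * (∫ l in Set.Ioo (0 : ℝ) (1 / 2),
          ((1 - l) ^ (2 * α') + l ^ (2 * α') - 1) / (l ^ (α' + 1) * (1 - l) ^ (α' + 1)))
        = 0 ↔
      Aplus / Aminus = -Real.cos (Real.pi * α')) := by
  have hgeneral := conservation_identity_ratio_general ⟨one_half_pos.trans hα'.1, hα'.2⟩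
  exact ⟨hgeneral.1, fun Aplus Aminus _ hAminus => hgeneral.2 Aplus Aminus hAminus.ne'⟩
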